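/- arXiv:2305.12613 — 2 statements merged into one kernel-verified Lean document; each statement's English description precedes it below -/
import Mathlib

section
/- For finite nonnegative sequences x and y, one has x + y ≤ 2(x ⊕ y) in the left-padded entrywise order; that is, for every k, the k-th entry of the left-padded sum x + y is at most twice the k-th smallest element of the multiset union of x and y. -/
/-- The k-th entry (0-indexed) of the list `l` after left-padding it with zeros to length n. -/
noncomputable def padGet (l : List ℝ) (n k : ℕ) : ℝ :=
  if k < n - l.length then 0 else l.getD (k - (n - l.length)) 0

/-- The left-padded entrywise order on finite ascending sequences. -/
def seqLE (x y : List ℝ) : Prop :=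
  ∀ k < max x.length y.length,
    padGet x (max x.length y.length) k ≤ padGet y (max x.length y.length) k

/-- The entrywise sum of the left-padded versions of two ascending sequences. -/
noncomputable def seqAdd (x y : List ℝ) : List ℝ :=
  (List.range (max x.length y.length)).map
    (fun k => padGet x (max x.length y.length) k + padGet y (max x.length y.length) k)

/-- x ⊕ y : the ascending sequence formed by the multiset union of x and y. -/
noncomputable def seqMerge (x y : List ℝ) : List ℝ :=
  Multiset.sort (↑(x ++ y)) (· ≤ ·)

/-!
Write `z = x ⊕ y`. Both `x` and `y` are sublists of the ascending list `z`, and the `j`-th largest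
entry of a sublist is at most the `j`-th largest entry of the whole list. Left-padding aligns the
lists at their largest entries, so `x ≤ z` and `y ≤ z` in the left-padded order; adding these
gives `x + y ≤ 2z`.
-/

/-- The offset `z.length - l.length` aligns the two lists at their last entries. -/
theorem rel_getElem_of_sublist_of_pairwise {α : Type*} {r : α → α → Prop} [Std.Refl r]
    {l z : List α} (hlz : l.Sublist z) (hz : z.Pairwise r) {i : ℕ} (hi : i < l.length) :
    r l[i] (z[i + (z.length - l.length)]'(by have := hlz.length_le; omega)) := by
  -- The tail of `l` after `l[i]` must fit into `z` after the position `j` of `l[i]`.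
  have hdrop : (l[i] :: l.drop (i + 1)).Sublist z :=
    List.drop_eq_getElem_cons hi ▸ (List.drop_sublist i l).trans hlz
  obtain ⟨s, t, rfl, hs, ht⟩ := List.cons_sublist_iff.1 hdrop
  obtain ⟨j, hj, hji⟩ := List.getElem_of_mem hs
  have hlen : l.length - (i + 1) ≤ t.length := by simpa using ht.length_le
  have hjt : j < (s ++ t).length := by rw [List.length_append]; omega
  have hle : j ≤ i + ((s ++ t).length - l.length) := by rw [List.length_append]; omega
  rw [← hji, ← List.getElem_append_left (h' := hjt) hj]
  exact hz.rel_get_of_le (Fin.mk_le_mk.2 hle)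

theorem padGet_of_lt {l : List ℝ} {n k : ℕ} (hk : k < n - l.length) : padGet l n k = 0 :=
  if_pos hk

theorem padGet_length {l : List ℝ} {k : ℕ} (hk : k < l.length) : padGet l l.length k = l[k] := by
  simp [padGet, hk]

theorem padGet_add_add {l : List ℝ} {n : ℕ} (hn : l.length ≤ n) (k d : ℕ) :
    padGet l (n + d) (k + d) = padGet l n k := by
  have hlt : k + d < n + d - l.length ↔ k < n - l.length := by omega
  have hsub : k + d - (n + d - l.length) = k - (n - l.length) := by omega
  simp only [padGet, hlt, hsub]

theorem seqLE_iff_of_length_le {x y : List ℝ} (h : x.length ≤ y.length) :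
    seqLE x y ↔ ∀ (k : ℕ) (hk : k < y.length), padGet x y.length k ≤ y[k] := by
  simp only [seqLE, max_eq_right h]
  exact forall₂_congr fun k hk => by rw [padGet_length hk]

theorem seqLE_of_sublist {l z : List ℝ} (hlz : l.Sublist z) (hz : z.Pairwise (· ≤ ·))
    (hz0 : ∀ a ∈ z, 0 ≤ a) : seqLE l z := by
  refine (seqLE_iff_of_length_le hlz.length_le).2 fun k hk => ?_
  rcases lt_or_ge k (z.length - l.length) with hpad | hpad
  · exact (padGet_of_lt hpad).trans_le (hz0 _ (List.getElem_mem hk))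
  · obtain ⟨i, rfl⟩ := Nat.exists_eq_add_of_le' hpad
    have hi : i < l.length := by omega
    calc padGet l z.length (i + (z.length - l.length))
        = padGet l l.length i := by
          rw [← padGet_add_add le_rfl i, Nat.add_sub_cancel' hlz.length_le]
      _ = l[i] := padGet_length hi
      _ ≤ z[i + (z.length - l.length)] := rel_getElem_of_sublist_of_pairwise hlz hz hi

theorem length_seqAdd (x y : List ℝ) : (seqAdd x y).length = max x.length y.length := by
  simp [seqAdd]

theorem padGet_seqAdd {x y : List ℝ} {n k : ℕ} (hx : x.length ≤ n) (hy : y.length ≤ n)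
    (hk : k < n) : padGet (seqAdd x y) n k = padGet x n k + padGet y n k := by
  obtain ⟨d, rfl⟩ := Nat.exists_eq_add_of_le (max_le hx hy)
  rcases lt_or_ge k d with hkd | hkd
  · have hpad {l : List ℝ} (hl : l.length ≤ max x.length y.length) :
        padGet l (max x.length y.length + d) k = 0 := padGet_of_lt (by omega)
    rw [hpad (length_seqAdd x y).le, hpad (le_max_left _ _), hpad (le_max_right _ _), add_zero]
  · obtain ⟨j, rfl⟩ := Nat.exists_eq_add_of_le' hkd
    have hj : j < (seqAdd x y).length := by rw [length_seqAdd]; omega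
    rw [padGet_add_add (length_seqAdd x y).le, padGet_add_add (le_max_left _ _),
      padGet_add_add (le_max_right _ _), ← length_seqAdd, padGet_length hj]
    simp [seqAdd]

theorem seqAdd_le_two_mul_of_seqLE {x y z : List ℝ} (hxz : x.length ≤ z.length)
    (hyz : y.length ≤ z.length) (hx : seqLE x z) (hy : seqLE y z) :
    seqLE (seqAdd x y) (z.map (fun a => 2 * a)) := by
  have hlen : (seqAdd x y).length ≤ (z.map (fun a => 2 * a)).length := by
    rw [length_seqAdd, List.length_map]
    exact max_le hxz hyz
  refine (seqLE_iff_of_length_le hlen).2 fun k hk => ?_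
  rw [List.length_map] at hk
  rw [List.length_map, List.getElem_map, padGet_seqAdd hxz hyz hk, two_mul]
  exact add_le_add ((seqLE_iff_of_length_le hxz).1 hx k hk) ((seqLE_iff_of_length_le hyz).1 hy k hk)

theorem seqMerge_perm (x y : List ℝ) : (seqMerge x y).Perm (x ++ y) :=
  Multiset.coe_eq_coe.1 (Multiset.sort_eq _ _)

theorem pairwise_seqMerge (x y : List ℝ) : (seqMerge x y).Pairwise (· ≤ ·) :=
  Multiset.pairwise_sort _ _

theorem sublist_seqMerge_left {x : List ℝ} (hx : x.Pairwise (· ≤ ·)) (y : List ℝ) :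
    x.Sublist (seqMerge x y) :=
  List.sublist_of_subperm_of_pairwise
    ((List.sublist_append_left x y).subperm.trans (seqMerge_perm x y).symm.subperm)
    hx (pairwise_seqMerge x y)

theorem sublist_seqMerge_right (x : List ℝ) {y : List ℝ} (hy : y.Pairwise (· ≤ ·)) :
    y.Sublist (seqMerge x y) :=
  List.sublist_of_subperm_of_pairwise
    ((List.sublist_append_right x y).subperm.trans (seqMerge_perm x y).symm.subperm)
    hy (pairwise_seqMerge x y)

/-- For finite nonnegative ascending sequences x and y, one has x + y ≤ 2(x ⊕ y)
in the left-padded entrywise order. -/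
theorem seqAdd_le_two_seqMerge (x y : List ℝ)
    (hx : x.Pairwise (· ≤ ·)) (hy : y.Pairwise (· ≤ ·))
    (hx0 : ∀ a ∈ x, 0 ≤ a) (hy0 : ∀ a ∈ y, 0 ≤ a) :
    seqLE (seqAdd x y) ((seqMerge x y).map (fun a => 2 * a)) := by
  have hz : (seqMerge x y).Pairwise (· ≤ ·) := pairwise_seqMerge x y
  have hz0 : ∀ a ∈ seqMerge x y, 0 ≤ a := fun a ha =>
    (List.mem_append.1 ((seqMerge_perm x y).mem_iff.1 ha)).elim (hx0 a) (hy0 a)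
  have hxz : x.Sublist (seqMerge x y) := sublist_seqMerge_left hx y
  have hyz : y.Sublist (seqMerge x y) := sublist_seqMerge_right x hy
  exact seqAdd_le_two_mul_of_seqLE hxz.length_le hyz.length_le
    (seqLE_of_sublist hxz hz hz0) (seqLE_of_sublist hyz hz hz0)
end

section
/- Euler–Poincaré formula for open and closed sets: Let G be a finite abstract simplicial complex, K ⊆ G a subcomplex and U = G \ K (the case K = ∅, U = G includes the classical closed case). Then Σ_{p≥0} (−1)^p f_p(U) = Σ_{p≥0} (−1)^p b_p(U), where f_p(U) is the number of p-simplices in U and b_p(U) is the p-th Betti number of U. -/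
open Matrix

/-- A finite abstract simplicial complex: a finite nonempty collection of nonempty
finite subsets of ℕ closed under taking nonempty subsets. -/
def IsComplex (G : Finset (Finset ℕ)) : Prop :=
  G.Nonempty ∧ ∅ ∉ G ∧ ∀ x ∈ G, ∀ y : Finset ℕ, y ⊆ x → y.Nonempty → y ∈ G

/-- A subcomplex: a set of sets closed under taking nonempty subsets. -/
def IsSubcomplex (K : Finset (Finset ℕ)) : Prop :=
  ∀ x ∈ K, ∀ y : Finset ℕ, y ⊆ x → y.Nonempty → y ∈ K

/-- The incidence sign s(x,y) = (-1)^i when y is obtained from x by deleting the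
(i+1)-th smallest element of x. -/
noncomputable def incSign (x y : Finset ℕ) : ℝ :=
  (-1 : ℝ) ^ (x.filter (fun v => ∃ w ∈ x \ y, v < w)).card

/-- The exterior derivative matrix of a subset A of a simplicial complex. -/
noncomputable def extDer (A : Finset (Finset ℕ)) : Matrix A A ℝ :=
  Matrix.of fun x y =>
    if (y : Finset ℕ) ⊆ (x : Finset ℕ) ∧ (x : Finset ℕ).card = (y : Finset ℕ).card + 1
    then incSign (x : Finset ℕ) (y : Finset ℕ) else 0

/-- The Dirac matrix D = d + dᵀ. -/
noncomputable def dirac (A : Finset (Finset ℕ)) : Matrix A A ℝ :=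
  extDer A + (extDer A)ᵀ

/-- The Hodge Laplacian L = D². -/
noncomputable def hodge (A : Finset (Finset ℕ)) : Matrix A A ℝ :=
  dirac A * dirac A

/-- The block of the Hodge Laplacian acting on p-forms: the submatrix of L on
the p-simplices (sets of cardinality p+1). -/
noncomputable def hodgeBlock (A : Finset (Finset ℕ)) (p : ℕ) :
    Matrix (A.filter fun x => x.card = p + 1) (A.filter fun x => x.card = p + 1) ℝ :=
  (hodge A).submatrix
    (fun x => ⟨x.1, (Finset.mem_filter.mp x.2).1⟩)
    (fun x => ⟨x.1, (Finset.mem_filter.mp x.2).1⟩)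

/-- The p-th Betti number: the dimension of the kernel of the p-form block of the
Hodge Laplacian. -/
noncomputable def betti (A : Finset (Finset ℕ)) (p : ℕ) : ℕ :=
  Module.finrank ℝ (LinearMap.ker (Matrix.toLin' (hodgeBlock A p)))

/-- The number of p-simplices in a set of sets A. -/
def fvec (A : Finset (Finset ℕ)) (p : ℕ) : ℕ :=
  (A.filter fun x => x.card = p + 1).card

/-!
If `z ⊆ x` differ by two elements `a` and `b`, then `z ∪ {a}` and `z ∪ {b}` are the only sets
strictly in between, and they contribute opposite signs to the `(x, z)` entry of `d²`. A difference
`A` of complexes contains both as soon as it contains `z` and `x`, so `d² = 0` on `A`. The Laplacian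
on `p`-forms is then `d_pᵀ d_p + d_{p-1} d_{p-1}ᵀ`. Over an ordered field its kernel is
`ker d_p ∩ ker d_{p-1}ᵀ`, and `d_{p-1}ᵀ` maps `ker d_p ⊇ im d_{p-1}` onto its whole image. Hence
`f_p = rank d_p + rank d_{p-1} + b_p`, and the ranks telescope in the alternating sum.
-/

section Matrix

variable {l m n R : Type*} [Fintype m]

theorem submatrix_mul_submatrix_of_injective [NonUnitalNonAssocSemiring R] {l' m' n' : Type*}
    [Fintype m'] (M : Matrix l m R) (N : Matrix m n R) (r : l' → l) {e : m' → m} (c : n' → n)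
    (he : e.Injective) (hM : ∀ i, ∀ j ∉ Set.range e, M (r i) j = 0) :
    M.submatrix r e * N.submatrix e c = (M * N).submatrix r c := by
  ext i k
  exact Fintype.sum_of_injective e he _ _ (fun j hj => mul_eq_zero_of_left (hM i j hj) _)
    fun _ => rfl

variable [Field R] [LinearOrder R] [IsStrictOrderedRing R]

theorem ker_mulVecLin_transpose_mul_self_add_self_mul_transpose [Fintype l] [Fintype n]
    (P : Matrix l m R) (Q : Matrix m n R) :
    LinearMap.ker (Pᵀ * P + Q * Qᵀ).mulVecLin =
      LinearMap.ker P.mulVecLin ⊓ LinearMap.ker Qᵀ.mulVecLin := by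
  have hgram : Pᵀ * P + Q * Qᵀ = (fromRows P Qᵀ)ᵀ * fromRows P Qᵀ := by
    rw [transpose_fromRows, fromCols_mul_fromRows, transpose_transpose]
  rw [hgram, ker_mulVecLin_transpose_mul_self]
  ext v
  simp only [LinearMap.mem_ker, Submodule.mem_inf, mulVecLin_apply, fromRows_mulVec, funext_iff,
    Sum.forall, Sum.elim_inl, Sum.elim_inr, Pi.zero_apply]

theorem map_ker_mulVecLin_transpose [Finite n] {P : Matrix l m R} {Q : Matrix m n R}
    (hPQ : P * Q = 0) :
    (LinearMap.ker P.mulVecLin).map Qᵀ.mulVecLin = LinearMap.range Qᵀ.mulVecLin := by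
  cases nonempty_fintype n
  refine le_antisymm LinearMap.map_le_range ?_
  have hrange : LinearMap.range Q.mulVecLin ≤ LinearMap.ker P.mulVecLin := by
    rw [LinearMap.range_le_ker_iff, ← mulVecLin_mul, hPQ, mulVecLin_zero]
  have hgram : LinearMap.range (Qᵀ * Q).mulVecLin = LinearMap.range Qᵀ.mulVecLin := by
    refine Submodule.eq_of_le_of_finrank_eq ?_ ?_
    · rw [mulVecLin_mul]
      exact LinearMap.range_comp_le_range _ _
    · exact (rank_transpose_mul_self Q).trans (rank_transpose Q).symm
  rw [← hgram, mulVecLin_mul, LinearMap.range_comp]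
  exact Submodule.map_mono hrange

theorem rank_add_rank_add_finrank_ker_of_mul_eq_zero [Fintype l] [Fintype n]
    {P : Matrix l m R} {Q : Matrix m n R} (hPQ : P * Q = 0) :
    P.rank + Q.rank + Module.finrank R (LinearMap.ker (Pᵀ * P + Q * Qᵀ).mulVecLin) =
      Fintype.card m := by
  have hQ := (Qᵀ.mulVecLin.domRestrict (LinearMap.ker P.mulVecLin)).finrank_range_add_finrank_ker
  rw [LinearMap.range_domRestrict, map_ker_mulVecLin_transpose hPQ, LinearMap.ker_domRestrict,
    ← Submodule.finrank_map_subtype_eq, Submodule.map_comap_subtype,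
    ← ker_mulVecLin_transpose_mul_self_add_self_mul_transpose, ← rank, rank_transpose] at hQ
  have hP := P.mulVecLin.finrank_range_add_finrank_ker
  rw [Module.finrank_fintype_fun_eq_card, ← rank] at hP
  rw [add_assoc, hQ, hP]

end Matrix

theorem sum_range_neg_one_pow_mul_eq {R : Type*} [CommRing R] {f b r : ℕ → R}
    (h : ∀ p, f p = r (p + 1) + r p + b p) (n : ℕ) :
    ∑ p ∈ Finset.range n, (-1) ^ p * f p =
      ∑ p ∈ Finset.range n, (-1) ^ p * b p + r 0 - (-1) ^ n * r n := by
  induction n with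
  | zero => simp
  | succ n ih =>
    rw [Finset.sum_range_succ, Finset.sum_range_succ, ih, h]
    ring

/-- The incidence number `[x : y]`: the entry of every `extDer A` at `(x, y)`, defined on sets
rather than on members of `A` so that it does not depend on the family `A`. -/
noncomputable def incidence (x y : Finset ℕ) : ℝ :=
  if y ⊆ x ∧ x.card = y.card + 1 then incSign x y else 0

theorem extDer_apply (A : Finset (Finset ℕ)) (x y : A) : extDer A x y = incidence x y :=
  rfl

theorem covBy_of_incidence_ne_zero {x y : Finset ℕ} (h : incidence x y ≠ 0) : y ⋖ x := by
  obtain ⟨hyx, hcard⟩ : y ⊆ x ∧ x.card = y.card + 1 := by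
    by_contra hxy
    exact h (if_neg hxy)
  rw [Finset.covBy_iff_card_sdiff_eq_one, Finset.card_sdiff_of_subset hyx]
  exact ⟨hyx, by omega⟩

theorem incidence_insert {z : Finset ℕ} {a : ℕ} (ha : a ∉ z) :
    incidence (insert a z) z = (-1) ^ (z.filter (· < a)).card := by
  rw [incidence, if_pos ⟨Finset.subset_insert a z, Finset.card_insert_of_notMem ha⟩, incSign,
    Finset.insert_sdiff_cancel ha]
  simp [Finset.filter_insert]

theorem incidence_insert_insert_add_swap {z : Finset ℕ} {a b : ℕ} (ha : a ∉ z) (hb : b ∉ z)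
    (hab : a ≠ b) :
    incidence (insert b (insert a z)) (insert a z) * incidence (insert a z) z +
      incidence (insert a (insert b z)) (insert b z) * incidence (insert b z) z = 0 := by
  wlog hlt : a < b generalizing a b
  · rw [add_comm]
    exact this hb ha hab.symm (hab.lt_or_gt.resolve_left hlt)
  have hb' : b ∉ insert a z := by simp [hb, hab.symm]
  have ha' : a ∉ insert b z := by simp [ha, hab]
  have ha_filter : a ∉ z.filter (· < b) := fun h => ha (Finset.mem_filter.mp h).1
  rw [incidence_insert ha, incidence_insert hb, incidence_insert hb', incidence_insert ha',
    Finset.filter_insert, if_pos hlt, Finset.filter_insert, if_neg hlt.not_gt,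
    Finset.card_insert_of_notMem ha_filter]
  ring

theorem exists_eq_insert_of_covBy_of_covBy {α : Type*} [DecidableEq α] {x y z : Finset α}
    (hzy : z ⋖ y) (hyx : y ⋖ x) :
    ∃ a b, a ∉ z ∧ b ∉ z ∧ a ≠ b ∧ y = insert a z ∧ z ∪ x \ y = insert b z ∧
      x = insert b (insert a z) := by
  obtain ⟨a, ha, rfl⟩ := hzy.exists_finset_insert
  obtain ⟨b, hb, rfl⟩ := hyx.exists_finset_insert
  obtain ⟨hba, hbz⟩ := not_or.mp (Finset.mem_insert.not.mp hb)
  exact ⟨a, b, ha, hbz, Ne.symm hba, rfl,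
    by rw [Finset.insert_sdiff_cancel hb, Finset.union_singleton], rfl⟩

section OrdConnected

variable {A : Finset (Finset ℕ)}

theorem sum_incidence_mul_incidence (hA : (A : Set (Finset ℕ)).OrdConnected)
    {x z : Finset ℕ} (hx : x ∈ A) (hz : z ∈ A) :
    ∑ y ∈ A, incidence x y * incidence y z = 0 := by
  classical
  have hcover : ∀ y ∈ A, incidence x y * incidence y z ≠ 0 → z ⋖ y ∧ y ⋖ x := fun y _ h =>
    ⟨covBy_of_incidence_ne_zero (right_ne_zero_of_mul h),
      covBy_of_incidence_ne_zero (left_ne_zero_of_mul h)⟩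
  rw [← Finset.sum_filter_of_ne hcover]
  have hpair : ∀ y ∈ A.filter (fun y => z ⋖ y ∧ y ⋖ x), ∃ a b, a ∉ z ∧ b ∉ z ∧ a ≠ b ∧
      y = insert a z ∧ z ∪ x \ y = insert b z ∧ x = insert b (insert a z) := fun y hy =>
    exists_eq_insert_of_covBy_of_covBy (Finset.mem_filter.mp hy).2.1 (Finset.mem_filter.mp hy).2.2
  -- `y ↦ z ∪ x \ y` exchanges the two sets strictly between `z` and `x`.
  refine Finset.sum_involution (fun y _ => z ∪ x \ y) ?_ ?_ ?_ ?_
  · intro y hy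
    obtain ⟨a, b, ha, hb, hab, rfl, hflip, rfl⟩ := hpair y hy
    rw [hflip, ← incidence_insert_insert_add_swap ha hb hab, Finset.insert_comm a b z]
  · intro y hy _
    obtain ⟨a, b, ha, -, hab, rfl, hflip, rfl⟩ := hpair y hy
    rw [hflip]
    exact fun h => (Finset.mem_insert.mp (h ▸ Finset.mem_insert_self a z)).elim hab ha
  · intro y hy
    obtain ⟨a, b, ha, hb, hab, rfl, hflip, rfl⟩ := hpair y hy
    have hzb : z ⋖ insert b z := Finset.covBy_insert hb
    have hbx : insert b z ⋖ insert b (insert a z) := by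
      rw [Finset.insert_comm]
      exact Finset.covBy_insert (by simp [ha, hab])
    rw [hflip, Finset.mem_filter]
    exact ⟨hA.out hz hx ⟨hzb.le, hbx.le⟩, hzb, hbx⟩
  · intro y hy
    obtain ⟨a, b, ha, -, hab, rfl, hflip, rfl⟩ := hpair y hy
    have hab' : a ∉ insert b z := by simp [ha, hab]
    rw [hflip, Finset.insert_comm, Finset.insert_sdiff_cancel hab', Finset.union_singleton]

theorem extDer_mul_extDer (hA : (A : Set (Finset ℕ)).OrdConnected) :
    extDer A * extDer A = 0 := by
  ext x z
  simp only [mul_apply, extDer_apply, Matrix.zero_apply]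
  rw [Finset.sum_coe_sort A fun y => incidence x y * incidence y z]
  exact sum_incidence_mul_incidence hA x.2 z.2

theorem hodge_eq (hA : (A : Set (Finset ℕ)).OrdConnected) :
    hodge A = (extDer A)ᵀ * extDer A + extDer A * (extDer A)ᵀ := by
  have hd := extDer_mul_extDer hA
  have hdT : (extDer A)ᵀ * (extDer A)ᵀ = 0 := by rw [← transpose_mul, hd, transpose_zero]
  rw [hodge, dirac, add_mul, mul_add, mul_add, hd, hdT, zero_add, add_zero, add_comm]

/-- The inclusion into `A` of its members of cardinality `n`, that is, of its
`(n - 1)`-simplices. -/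
def simplexInclusion (A : Finset (Finset ℕ)) (n : ℕ) (x : A.filter fun x => x.card = n) : A :=
  ⟨x.1, (Finset.mem_filter.mp x.2).1⟩

theorem simplexInclusion_injective (A : Finset (Finset ℕ)) (n : ℕ) :
    (simplexInclusion A n).Injective := fun _ _ h =>
  Subtype.ext (congrArg (fun x : A => (x : Finset ℕ)) h)

theorem card_simplexInclusion {n : ℕ} (x : A.filter fun x => x.card = n) :
    (simplexInclusion A n x : Finset ℕ).card = n :=
  (Finset.mem_filter.mp x.2).2

theorem mem_range_simplexInclusion {n : ℕ} {x : A} :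
    x ∈ Set.range (simplexInclusion A n) ↔ (x : Finset ℕ).card = n := by
  constructor
  · rintro ⟨y, rfl⟩
    exact card_simplexInclusion y
  · exact fun h => ⟨⟨x, Finset.mem_filter.mpr ⟨x.2, h⟩⟩, rfl⟩

/-- The block of `extDer A` taking `(n - 1)`-forms to `n`-forms. Rows and columns are indexed by
cardinality, so that `n = 0` gives the (for `∅ ∉ A` empty) block of the `(-1)`-forms. -/
noncomputable def extDerBlock (A : Finset (Finset ℕ)) (n : ℕ) :
    Matrix (A.filter fun x => x.card = n + 1) (A.filter fun x => x.card = n) ℝ :=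
  (extDer A).submatrix (simplexInclusion A (n + 1)) (simplexInclusion A n)

theorem extDer_simplexInclusion_left {n : ℕ} (x : A.filter fun x => x.card = n + 1) {y : A}
    (hy : y ∉ Set.range (simplexInclusion A n)) :
    extDer A (simplexInclusion A (n + 1) x) y = 0 := by
  refine if_neg fun h => hy (mem_range_simplexInclusion.mpr ?_)
  exact Nat.succ_injective (h.2.symm.trans (card_simplexInclusion x))

theorem extDer_simplexInclusion_right {n : ℕ} (y : A.filter fun x => x.card = n) {x : A}
    (hx : x ∉ Set.range (simplexInclusion A (n + 1))) :
    extDer A x (simplexInclusion A n y) = 0 := by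
  refine if_neg fun h => hx (mem_range_simplexInclusion.mpr ?_)
  rw [h.2, card_simplexInclusion y]

theorem extDerBlock_succ_mul_extDerBlock (hA : (A : Set (Finset ℕ)).OrdConnected) (n : ℕ) :
    extDerBlock A (n + 1) * extDerBlock A n = 0 := by
  rw [extDerBlock, extDerBlock, submatrix_mul_submatrix_of_injective _ _ _ _
    (simplexInclusion_injective A (n + 1)) fun x _ => extDer_simplexInclusion_left x,
    extDer_mul_extDer hA, submatrix_zero]
  rfl

theorem hodgeBlock_eq (hA : (A : Set (Finset ℕ)).OrdConnected) (p : ℕ) :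
    hodgeBlock A p =
      (extDerBlock A (p + 1))ᵀ * extDerBlock A (p + 1) +
        extDerBlock A p * (extDerBlock A p)ᵀ := by
  have hup : (extDerBlock A (p + 1))ᵀ * extDerBlock A (p + 1) =
      ((extDer A)ᵀ * extDer A).submatrix (simplexInclusion A (p + 1))
        (simplexInclusion A (p + 1)) := by
    rw [extDerBlock, transpose_submatrix]
    exact submatrix_mul_submatrix_of_injective _ _ _ _ (simplexInclusion_injective A _)
      fun x _ => extDer_simplexInclusion_right x
  have hdown : extDerBlock A p * (extDerBlock A p)ᵀ =
      (extDer A * (extDer A)ᵀ).submatrix (simplexInclusion A (p + 1))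
        (simplexInclusion A (p + 1)) := by
    rw [extDerBlock, transpose_submatrix]
    exact submatrix_mul_submatrix_of_injective _ _ _ _ (simplexInclusion_injective A _)
      fun x _ => extDer_simplexInclusion_left x
  rw [hup, hdown, hodgeBlock, hodge_eq hA]
  rfl

theorem fvec_eq_rank_add_rank_add_betti (hA : (A : Set (Finset ℕ)).OrdConnected) (p : ℕ) :
    fvec A p = (extDerBlock A (p + 1)).rank + (extDerBlock A p).rank + betti A p := by
  have h := rank_add_rank_add_finrank_ker_of_mul_eq_zero (extDerBlock_succ_mul_extDerBlock hA p)
  rw [← hodgeBlock_eq hA, ← toLin'_apply', Fintype.card_coe] at h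
  exact h.symm

theorem rank_extDerBlock_zero (hA : ∅ ∉ A) : (extDerBlock A 0).rank = 0 := by
  have hempty : A.filter (fun x => x.card = 0) = ∅ :=
    Finset.filter_eq_empty_iff.mpr fun x hx hcard => hA (Finset.card_eq_zero.mp hcard ▸ hx)
  exact Nat.le_zero.mp <| (extDerBlock A 0).rank_le_card_width.trans_eq <| by
    rw [Fintype.card_coe, hempty, Finset.card_empty]

theorem rank_extDerBlock_of_sup_card_le {n : ℕ} (hn : A.sup Finset.card ≤ n) :
    (extDerBlock A n).rank = 0 := by
  have hempty : A.filter (fun x => x.card = n + 1) = ∅ :=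
    Finset.filter_eq_empty_iff.mpr fun x hx hcard => by
      have : x.card ≤ n := (Finset.le_sup (f := Finset.card) hx).trans hn
      omega
  exact Nat.le_zero.mp <| (extDerBlock A n).rank_le_card_height.trans_eq <| by
    rw [Fintype.card_coe, hempty, Finset.card_empty]

theorem euler_poincare_general (hA : (A : Set (Finset ℕ)).OrdConnected) (hempty : ∅ ∉ A)
    {n : ℕ} (hn : A.sup Finset.card ≤ n) :
    ∑ p ∈ Finset.range n, (-1 : ℤ) ^ p * (fvec A p : ℤ) =
      ∑ p ∈ Finset.range n, (-1 : ℤ) ^ p * (betti A p : ℤ) := by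
  have htelescope := sum_range_neg_one_pow_mul_eq (R := ℤ) (f := fun p => fvec A p)
    (b := fun p => betti A p) (r := fun p => (extDerBlock A p).rank)
    (fun p => mod_cast fvec_eq_rank_add_rank_add_betti hA p) n
  simpa only [rank_extDerBlock_zero hempty, rank_extDerBlock_of_sup_card_le hn, Nat.cast_zero,
    mul_zero, add_zero, sub_zero] using htelescope

end OrdConnected

theorem IsComplex.ordConnected_sdiff {G K : Finset (Finset ℕ)} (hG : IsComplex G)
    (hK : IsSubcomplex K) : ((G \ K : Finset (Finset ℕ)) : Set (Finset ℕ)).OrdConnected := by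
  refine ⟨fun z hz x hx y ⟨hzy, hyx⟩ => ?_⟩
  rw [Finset.mem_coe, Finset.mem_sdiff] at hz hx ⊢
  have hz_nonempty : z.Nonempty :=
    Finset.nonempty_iff_ne_empty.mpr fun h => hG.2.1 (h ▸ hz.1)
  exact ⟨hG.2.2 x hx.1 y hyx (hz_nonempty.mono hzy), fun hy => hz.2 (hK y hy z hzy hz_nonempty)⟩

/-- **Euler–Poincaré formula for open and closed sets.** For U = G \ K with K a subcomplex
of the complex G (the case K = ∅ covers the classical closed case U = G),
Σ_p (-1)^p f_p(U) = Σ_p (-1)^p b_p(U); all terms with p beyond the maximal dimension of G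
vanish, so the sums are taken over p < sup_{x ∈ G} |x|. -/
theorem euler_poincare (G K : Finset (Finset ℕ)) (hG : IsComplex G)
    (hKG : K ⊆ G) (hK : IsSubcomplex K) :
    ∑ p ∈ Finset.range (G.sup Finset.card), (-1 : ℤ) ^ p * (fvec (G \ K) p : ℤ) =
      ∑ p ∈ Finset.range (G.sup Finset.card), (-1 : ℤ) ^ p * (betti (G \ K) p : ℤ) :=
  euler_poincare_general (hG.ordConnected_sdiff hK)
    (fun h => hG.2.1 (Finset.mem_sdiff.mp h).1) (Finset.sup_mono Finset.sdiff_subset)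
end
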